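/- arXiv:1811.06955 — 2 statements merged into one kernel-verified Lean document; each statement's English description precedes it below -/
import Mathlib

section
/- Let R be a commutative ring, M an R-module, and φ : M → R an R-linear map. Define the binary operation x ▷ y = (φ(y) + 1)·x − φ(x)·y on M. Then this operation is right self-distributive: for all x, y, z ∈ M, (x ▷ y) ▷ z = (x ▷ z) ▷ (y ▷ z). -/
/-- The operation `x ▷ y = (φ(y) + 1) • x - φ(x) • y` on an `R`-module `M`. -/
def tri {R M : Type*} [CommRing R] [AddCommGroup M] [Module R M]
    (φ : M →ₗ[R] R) (x y : M) : M :=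
  (φ y + 1) • x - φ x • y

section

variable {R M N : Type*} [CommRing R] [AddCommGroup M] [Module R M] [AddCommGroup N] [Module R N]

theorem map_tri_of_comp_eq {φ : M →ₗ[R] R} {ψ : N →ₗ[R] R} {f : M →ₗ[R] N}
    (h : ψ ∘ₗ f = φ) (x y : M) : f (tri φ x y) = tri ψ (f x) (f y) := by
  subst h
  simp only [tri, map_sub, map_smul, LinearMap.comp_apply]

/-- The right translation `x ↦ x ▷ z`, bundled as a linear map: `▷` is linear in its left
argument, so self-distributivity says that this linear map is an endomorphism of `▷`. -/
def triRight (φ : M →ₗ[R] R) (z : M) : M →ₗ[R] M :=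
  (φ z + 1) • LinearMap.id - φ.smulRight z

theorem triRight_apply (φ : M →ₗ[R] R) (z x : M) : triRight φ z x = tri φ x z :=
  rfl

theorem map_tri (φ : M →ₗ[R] R) (x y : M) : φ (tri φ x y) = φ x :=
  calc
    φ (tri φ x y) = (φ y + 1) * φ x - φ x * φ y := by
      simp only [tri, map_sub, map_smul, smul_eq_mul]
    _ = φ x := by ring

theorem comp_triRight (φ : M →ₗ[R] R) (z : M) : φ ∘ₗ triRight φ z = φ :=
  LinearMap.ext fun x => map_tri φ x z

end

/-- (Q3) The operation `x ▷ y = (φ(y) + 1) • x - φ(x) • y` is right self-distributive. -/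
theorem tri_right_distrib {R M : Type*} [CommRing R] [AddCommGroup M] [Module R M]
    (φ : M →ₗ[R] R) : ∀ x y z : M, tri φ (tri φ x y) z = tri φ (tri φ x z) (tri φ y z) := by
  intro x y z
  simpa only [triRight_apply] using map_tri_of_comp_eq (comp_triRight φ z) x y
end

section
/- Let R be a commutative ring, M an R-module, and φ : M → R an R-linear map. Suppose y ∈ M is such that φ(y) + 1 is a unit of R. Define x ▷ y = (φ(y) + 1)·x − φ(x)·y and z ▷⁻¹ y = (φ(y) + 1)⁻¹·(z + φ(z)·y). Then for every x ∈ M, (x ▷⁻¹ y) ▷ y = x. -/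
/-- The operation `z ▷⁻¹ y = (φ(y) + 1)⁻¹ • (z + φ(z) • y)` on an `R`-module `M`,
where `(φ(y) + 1)⁻¹` is `Ring.inverse (φ y + 1)` (the inverse when `φ(y) + 1` is a unit). -/
noncomputable def triInv {R M : Type*} [CommRing R] [AddCommGroup M] [Module R M]
    (φ : M →ₗ[R] R) (z y : M) : M :=
  Ring.inverse (φ y + 1) • (z + φ z • y)

section

variable {R M : Type*} [CommRing R] [AddCommGroup M] [Module R M] {φ : M →ₗ[R] R} {y : M}

theorem smul_triInv (hy : IsUnit (φ y + 1)) (z : M) :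
    (φ y + 1) • triInv φ z y = z + φ z • y := by
  rw [triInv, smul_smul, Ring.mul_inverse_cancel _ hy, one_smul]

theorem map_triInv (hy : IsUnit (φ y + 1)) (z : M) : φ (triInv φ z y) = φ z := by
  refine hy.mul_left_cancel ?_
  calc (φ y + 1) * φ (triInv φ z y)
      = φ ((φ y + 1) • triInv φ z y) := by rw [map_smul, smul_eq_mul]
    _ = φ (z + φ z • y) := by rw [smul_triInv hy]
    _ = φ z + φ z * φ y := by rw [map_add, map_smul, smul_eq_mul]
    _ = (φ y + 1) * φ z := by ring

end

/-- Half of (Q2): if `φ(y) + 1` is a unit of `R`, then `(x ▷⁻¹ y) ▷ y = x`. -/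
theorem triInv_tri {R M : Type*} [CommRing R] [AddCommGroup M] [Module R M]
    (φ : M →ₗ[R] R) (y : M) (hy : IsUnit (φ y + 1)) :
    ∀ x : M, tri φ (triInv φ x y) y = x := by
  intro x
  rw [tri, map_triInv hy, smul_triInv hy, add_sub_cancel_right]
end
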